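/- Let ℓ ≥ 2, N ≥ 1 and T ≥ 1 be integers, let v : Fin T → ZMod N, let y ∈ ZMod N, and let K ≥ 1 be a real number. Suppose the number of ℓ-element finsets I ⊆ Fin T with ∑_{i ∈ I} v i = y is at least K. Then at least one of the following holds: (a) there exists s ∈ ZMod N such that the number of (ℓ−1)-element finsets J ⊆ Fin T with ∑_{j ∈ J} v j = s is at least K^((ℓ−1)/ℓ); or (b) the number of indices i ∈ Fin T that are effective for y under v is at least K^(1/ℓ). -/

import Mathlib

/-!
Every `ℓ`-element finset of sum `y` has a largest element `i`; removing it leaves an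
`(ℓ-1)`-element finset of earlier indices with sum `y - v i`, so `i` is effective. Since removal
of `i` is injective on the finsets containing `i` (`card_fiber_le`), the `ℓ`-element finsets of
sum `y` number at most the sum over effective `i` of the number of `(ℓ-1)`-element finsets of sum
`y - v i` (`card_le_sum_effective`). If both alternatives failed, this total would be less than
`K ^ (1/ℓ) * K ^ ((ℓ-1)/ℓ) = K`.
-/

open Finset
open scoped Classical

/-- An index `i` is effective for `y` under `v` if some `(ℓ-1)`-element finset of earlier
indices completes it to an `ℓ`-tuple of sum `y`. -/
def Effective (N ℓ T : ℕ) (v : Fin T → ZMod N) (y : ZMod N) (i : Fin T) : Prop :=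
  ∃ J : Finset (Fin T), (∀ j ∈ J, j < i) ∧ J.card = ℓ - 1 ∧ v i + (∑ j ∈ J, v j) = y

lemma card_fiber_le (N ℓ T : ℕ) (v : Fin T → ZMod N) (y : ZMod N) (i : Fin T) :
    (univ.filter (fun I : Finset (Fin T) => (I.card = ℓ ∧ (∑ k ∈ I, v k) = y) ∧ i ∈ I)).card ≤
      (univ.filter (fun J : Finset (Fin T) =>
        J.card = ℓ - 1 ∧ (∑ j ∈ J, v j) = y - v i)).card := by
  apply card_le_card_of_injOn (fun I => I.erase i)
  · intro I hI
    obtain ⟨⟨hc, hs⟩, hi⟩ := (mem_filter.mp hI).2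
    refine mem_filter.mpr ⟨mem_univ _, ?_, ?_⟩
    · rw [card_erase_of_mem hi, hc]
    · rw [← hs, ← add_sum_erase I v hi]
      ring
  · intro I hI I' hI' h
    have hi := (mem_filter.mp hI).2.2
    have hi' := (mem_filter.mp hI').2.2
    rw [← insert_erase hi, ← insert_erase hi']
    exact congrArg (insert i) h

lemma card_le_sum_effective (N ℓ T : ℕ) (hℓ : 2 ≤ ℓ) (v : Fin T → ZMod N) (y : ZMod N) :
    (univ.filter (fun I : Finset (Fin T) => I.card = ℓ ∧ (∑ k ∈ I, v k) = y)).card ≤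
      ∑ i ∈ univ.filter (fun i : Fin T => Effective N ℓ T v y i),
        (univ.filter (fun J : Finset (Fin T) =>
          J.card = ℓ - 1 ∧ (∑ j ∈ J, v j) = y - v i)).card := by
  refine le_trans (le_trans (card_le_card ?_) card_biUnion_le)
    (sum_le_sum fun i _ => card_fiber_le N ℓ T v y i)
  intro I hI
  obtain ⟨hc, hs⟩ := (mem_filter.mp hI).2
  have hne : I.Nonempty := card_pos.mp (by omega)
  have hmem := I.max'_mem hne
  refine mem_biUnion.mpr ⟨I.max' hne, mem_filter.mpr ⟨mem_univ _, I.erase (I.max' hne), ?_, ?_, ?_⟩,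
    mem_filter.mpr ⟨mem_univ _, ⟨hc, hs⟩, hmem⟩⟩
  · exact fun j hj => I.lt_max'_of_mem_erase_max' hne hj
  · rw [card_erase_of_mem hmem, hc]
  · rw [add_sum_erase I v hmem, hs]

/-- Deterministic dichotomy: if `v : Fin T → ZMod N` admits at least `K` many
`ℓ`-element finsets of sum `y`, then either some value `s` has at least `K^((ℓ-1)/ℓ)`
many `(ℓ-1)`-element finsets of sum `s`, or at least `K^(1/ℓ)` indices are effective
for `y` under `v`. -/
theorem tuples_dichotomy (N ℓ T : ℕ) [NeZero N] (hN : 1 ≤ N) (hℓ : 2 ≤ ℓ) (hT : 1 ≤ T)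
    (v : Fin T → ZMod N) (y : ZMod N) (K : ℝ) (hK : 1 ≤ K)
    (hmany : K ≤ ((Finset.univ.filter
        (fun I : Finset (Fin T) => I.card = ℓ ∧ (∑ i ∈ I, v i) = y)).card : ℝ)) :
    (∃ s : ZMod N, K ^ (((ℓ : ℝ) - 1) / (ℓ : ℝ)) ≤ ((Finset.univ.filter
        (fun J : Finset (Fin T) => J.card = ℓ - 1 ∧ (∑ j ∈ J, v j) = s)).card : ℝ))
    ∨ K ^ ((1 : ℝ) / (ℓ : ℝ)) ≤
        ((Finset.univ.filter (fun i : Fin T => Effective N ℓ T v y i)).card : ℝ) := by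
  by_contra! ⟨hJ, hE⟩
  have hK0 : 0 < K := by linarith
  have hℓ0 : (ℓ : ℝ) ≠ 0 := by
    have : ℓ ≠ 0 := by omega
    exact_mod_cast this
  have hprod : K ^ ((1 : ℝ) / (ℓ : ℝ)) * K ^ (((ℓ : ℝ) - 1) / (ℓ : ℝ)) = K := by
    rw [← Real.rpow_add hK0, ← add_div, add_sub_cancel, div_self hℓ0, Real.rpow_one]
  have hsum := (Nat.cast_le (α := ℝ)).mpr (card_le_sum_effective N ℓ T hℓ v y)
  rw [Nat.cast_sum] at hsum
  have hbound := sum_le_card_nsmul (univ.filter (fun i : Fin T => Effective N ℓ T v y i)) _ _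
    (fun i _ => (hJ (y - v i)).le)
  rw [nsmul_eq_mul] at hbound
  have hlt := mul_lt_mul_of_pos_right hE (Real.rpow_pos_of_pos hK0 (((ℓ : ℝ) - 1) / (ℓ : ℝ)))
  linarith
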